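/- Let ρ be a quasi-periodic labelling. Then the action of G_ρ on ℝ is proximal: for every compact interval I ⊂ ℝ and every nonempty open interval J ⊂ ℝ there exists g ∈ G_ρ such that g(I) ⊆ J. -/

import Mathlib

/-! ### Letters, labellings and quasi-periodicity -/

/-- The four letters `a, b, a⁻¹, b⁻¹`. -/
inductive Letter : Type
  | a : Letter
  | b : Letter
  | A : Letter  -- `a⁻¹`
  | B : Letter  -- `b⁻¹`
  deriving DecidableEq

/-- The formal inverse of a letter. -/
def Letter.inv : Letter → Letter
  | .a => .A
  | .A => .a
  | .b => .B
  | .B => .b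

/-- We encode the set of half-integers `½ℤ` by `ℤ` via `m ↦ m / 2`; integer points
correspond to even indices and proper half-integer points to odd indices.
A labelling assigns `a^{±1}` to integer points and `b^{±1}` to half-integer points. -/
def IsLabelling (ρ : ℤ → Letter) : Prop :=
  ∀ m : ℤ, (Even m → ρ m = Letter.a ∨ ρ m = Letter.A) ∧
    (Odd m → ρ m = Letter.b ∨ ρ m = Letter.B)

/-- The word of the labelling `ρ` along the block `{k, k+1, …, k+n}` (in the
half-integer encoding, the block of size `n+1` starting at `k/2`). -/
def blockWord (ρ : ℤ → Letter) (k : ℤ) (n : ℕ) : List Letter :=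
  (List.range (n + 1)).map fun i => ρ (k + i)

/-- The formal inverse of a word: reverse the word and invert each letter. -/
def wordInv (w : List Letter) : List Letter :=
  (w.map Letter.inv).reverse

/-- A labelling is quasi-periodic if (1) every subword of the labelling appears as a
subword (string of consecutive letters) of every sufficiently large block, and (2) the
formal inverse of every subword of the labelling is again a subword of the labelling. -/
def IsQuasiPeriodic (ρ : ℤ → Letter) : Prop :=
  IsLabelling ρ ∧
    (∀ (k : ℤ) (n : ℕ), ∃ N : ℕ, ∀ (k' : ℤ) (n' : ℕ), N ≤ n' + 1 →
      (blockWord ρ k n) <:+: (blockWord ρ k' n')) ∧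
    (∀ (k : ℤ) (n : ℕ), ∃ k' : ℤ, blockWord ρ k' n = wordInv (blockWord ρ k n))

/-! ### Thompson's group `F` and the subgroup `H`

Orientation-preserving homeomorphisms of `[0,1]` are realised as order-automorphisms
of `ℝ` that are the identity outside `[0,1]`; orientation-preserving homeomorphisms of
the line are order-automorphisms of `ℝ`. -/

/-- A dyadic rational real number, i.e. an element of `ℤ[1/2]`. -/
def IsDyadic (x : ℝ) : Prop :=
  ∃ (a : ℤ) (b : ℕ), x = (a : ℝ) / 2 ^ b

/-- Membership in Thompson's group `F`: the identity outside `[0,1]`, and on `[0,1]`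
piecewise linear with breakpoints in `ℤ[1/2]` and slopes integer powers of `2`. -/
def InThompsonF (f : ℝ ≃o ℝ) : Prop :=
  (∀ x : ℝ, x ∉ Set.Icc (0 : ℝ) 1 → f x = x) ∧
    ∃ (m : ℕ) (x : Fin (m + 1) → ℝ), x 0 = 0 ∧ x (Fin.last m) = 1 ∧ StrictMono x ∧
      (∀ i, IsDyadic (x i)) ∧
      ∀ i : Fin m, ∃ (k : ℤ) (c : ℝ),
        ∀ t ∈ Set.Icc (x i.castSucc) (x i.succ), f t = 2 ^ k * t + c

/-- Membership in the subgroup `H ≤ F` of elements whose slopes at `0` and `1`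
coincide. -/
def InH (f : ℝ ≃o ℝ) : Prop :=
  InThompsonF f ∧
    ∃ (k : ℤ) (ε : ℝ), 0 < ε ∧ (∀ t ∈ Set.Icc (0 : ℝ) ε, f t = 2 ^ k * t) ∧
      ∀ t ∈ Set.Icc (1 - ε) (1 : ℝ), f t = 1 + 2 ^ k * (t - 1)

/-! ### The generators of `G_ρ` -/

/-- `ζ` is the homeomorphism of `ℝ` which on each `[n, n+1]` is the conjugate of `ν`
(a homeomorphism of `[0,1]`) by the orientation-preserving isometry `[n,n+1] → [0,1]`
if `ρ(n + ½) = b`, and by the orientation-reversing isometry if `ρ(n + ½) = b⁻¹`.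
(In the encoding of `½ℤ` by `ℤ`, the point `n + ½` has index `2n + 1`.) -/
def IsZeta (ρ : ℤ → Letter) (ν ζ : ℝ ≃o ℝ) : Prop :=
  ∀ n : ℤ, ∀ x ∈ Set.Icc (n : ℝ) (n + 1),
    (ρ (2 * n + 1) = Letter.b → ζ x = n + ν (x - n)) ∧
    (ρ (2 * n + 1) = Letter.B → ζ x = (n + 1) - ν ((n + 1) - x))

/-- `χ` is the homeomorphism of `ℝ` which on each `[n-½, n+½]` is the conjugate of `ν`
by the orientation-preserving isometry `[n-½, n+½] → [0,1]` if `ρ(n) = a`, and by the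
orientation-reversing isometry if `ρ(n) = a⁻¹`. -/
def IsChi (ρ : ℤ → Letter) (ν χ : ℝ ≃o ℝ) : Prop :=
  ∀ n : ℤ, ∀ x ∈ Set.Icc ((n : ℝ) - 1/2) ((n : ℝ) + 1/2),
    (ρ (2 * n) = Letter.a → χ x = ((n : ℝ) - 1/2) + ν (x - ((n : ℝ) - 1/2))) ∧
    (ρ (2 * n) = Letter.A → χ x = ((n : ℝ) + 1/2) - ν (((n : ℝ) + 1/2) - x))

/-! ### Bounded cohomology in degree two -/

/-- A bounded 2-cocycle on `G` with trivial real coefficients. -/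
def IsBounded2Cocycle {G : Type*} [Group G] (ω : G → G → ℝ) : Prop :=
  (∃ C : ℝ, ∀ g h : G, |ω g h| ≤ C) ∧
    ∀ g₁ g₂ g₃ : G, ω g₂ g₃ - ω (g₁ * g₂) g₃ + ω g₁ (g₂ * g₃) - ω g₁ g₂ = 0

/-- `ω` is the coboundary of a bounded real-valued function. -/
def IsCoboundaryOfBounded {G : Type*} [Group G] (ω : G → G → ℝ) : Prop :=
  ∃ φ : G → ℝ, (∃ C : ℝ, ∀ g : G, |φ g| ≤ C) ∧
    ∀ g h : G, ω g h = φ h - φ (g * h) + φ g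

/-- A group is 2-boundedly acyclic if `H²_b(G; ℝ) = 0`, i.e. every bounded 2-cocycle is
the coboundary of a bounded function. -/
def Is2BoundedlyAcyclic (G : Type*) [Group G] : Prop :=
  ∀ ω : G → G → ℝ, IsBounded2Cocycle ω → IsCoboundaryOfBounded ω

/-- A 2-cocycle is homogeneous if it vanishes on powers of a single element. -/
def IsHomogeneous {G : Type*} [Group G] (ω : G → G → ℝ) : Prop :=
  ∀ (g : G) (i j : ℤ), ω (g ^ i) (g ^ j) = 0

/-!
Call an interval `[a, b]` contractible to `p` if the group moves it into every neighbourhood of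
`p`. If some interval is not contractible to `p`, then, since orbits are unbounded, the supremum
`φ x` of the `y` such that `[x, y]` is contractible to `p` is finite and defines a monotone map
commuting with `G_ρ`; it moves `p` as soon as one interval `[p, q]` is contractible to `p`, which
for a half-integer `p` is achieved by an element that halves distances to `p`.

The half-integers are exactly the points fixed by one of the two copies of `H` in `G_ρ`, so `φ`
maps them to each other respecting parity. Comparing the images of a half-integer under the same
element of `H` in two cells shows that `φ` also respects orientations and quarter-integers, so it
is a translation by some `d / 2 ≠ 0` on the half-integers and `ρ` is periodic. But a periodic
labelling in which the inverse of every word occurs would satisfy `ρ r = (ρ r)⁻¹` for some `r`.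
Hence every interval contracts to every half-integer, and halving distances to half-integers shows
that the orbits of half-integers meet every open interval.
-/

section Contraction

section Preorder

variable {α : Type*} [Preorder α] {G : Subgroup (α ≃o α)}

/-- The pair `(a, b)`, standing for the interval `[a, b]`, can be moved by `G` into every open
interval around `p`. -/
def ContractsTo (G : Subgroup (α ≃o α)) (p a b : α) : Prop :=
  ∀ l u, l < p → p < u → ∃ g ∈ G, l < g a ∧ g b < u

theorem ContractsTo.mono {p a b a' b' : α} (h : ContractsTo G p a b) (ha : a ≤ a')
    (hb : b' ≤ b) : ContractsTo G p a' b' := fun l u hl hu =>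
  let ⟨g, hg, hga, hgb⟩ := h l u hl hu
  ⟨g, hg, hga.trans_le (g.monotone ha), (g.monotone hb).trans_lt hgb⟩

theorem ContractsTo.apply {p a b : α} (h : ContractsTo G p a b) {g : α ≃o α} (hg : g ∈ G) :
    ContractsTo G p (g a) (g b) := fun l u hl hu =>
  let ⟨f, hf, hfa, hfb⟩ := h l u hl hu
  ⟨f * g⁻¹, G.mul_mem hf (G.inv_mem hg), by simpa using hfa, by simpa using hfb⟩

theorem ContractsTo.exists_image_Icc_subset_Ioo {p a b c d : α} (h : ContractsTo G p a b)
    {f : α ≃o α} (hf : f ∈ G) (hp : f p ∈ Set.Ioo c d) :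
    ∃ g ∈ G, g '' Set.Icc a b ⊆ Set.Ioo c d := by
  obtain ⟨g, hg, hga, hgb⟩ := h (f.symm c) (f.symm d) (f.symm_apply_lt.2 hp.1)
    (f.lt_symm_apply.2 hp.2)
  refine ⟨f * g, G.mul_mem hf hg, ?_⟩
  rintro _ ⟨x, hx, rfl⟩
  exact ⟨f.symm_apply_lt.1 (hga.trans_le (g.monotone hx.1)),
    f.lt_symm_apply.1 ((g.monotone hx.2).trans_lt hgb)⟩

/-- The right endpoints of the intervals `[x, y]` that `G` contracts to `p`, together with the
half-line below `x`, which makes the set nonempty. -/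
def contractionReach (G : Subgroup (α ≃o α)) (p x : α) : Set α :=
  {y | y ≤ x ∨ ContractsTo G p x y}

theorem contractionReach_mono (p : α) : Monotone (contractionReach G p) := fun _ _ hx _ hy =>
  hy.imp (fun h => h.trans hx) fun h => h.mono hx le_rfl

theorem contractionReach_nonempty (p x : α) : (contractionReach G p x).Nonempty :=
  ⟨x, Or.inl le_rfl⟩

theorem apply_mem_contractionReach {p x y : α} {g : α ≃o α} (hg : g ∈ G)
    (hy : y ∈ contractionReach G p x) : g y ∈ contractionReach G p (g x) :=
  hy.imp (fun h => g.monotone h) fun h => h.apply hg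

theorem image_contractionReach (p x : α) {g : α ≃o α} (hg : g ∈ G) :
    g '' contractionReach G p x = contractionReach G p (g x) := by
  refine Set.Subset.antisymm (Set.image_subset_iff.2 fun y => apply_mem_contractionReach hg) ?_
  intro y hy
  refine ⟨g⁻¹ y, ?_, g.apply_symm_apply y⟩
  simpa only [RelIso.inv_apply_self] using apply_mem_contractionReach (G.inv_mem hg) hy

end Preorder

theorem bddAbove_contractionReach {α : Type*} [LinearOrder α] {G : Subgroup (α ≃o α)}
    (hG : ∀ x y : α, ∃ g ∈ G, y ≤ g x) {p a b : α} (hab : ¬ ContractsTo G p a b) (x : α) :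
    BddAbove (contractionReach G p x) := by
  obtain ⟨g, hg, hx⟩ := hG a x
  refine ⟨max (g a) (g b), ?_⟩
  rintro y (hy | hy)
  · exact le_max_of_le_left (hy.trans hx)
  · refine le_max_of_le_right (le_of_not_ge fun hby => hab ?_)
    simpa only [RelIso.inv_apply_self] using (hy.mono hx hby).apply (G.inv_mem hg)

variable {α : Type*} [ConditionallyCompleteLinearOrder α] {G : Subgroup (α ≃o α)}

theorem exists_le_apply_of_forall_exists_ne (hG : ∀ x, ∃ g ∈ G, g x ≠ x) (x y : α) :
    ∃ g ∈ G, y ≤ g x := by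
  by_contra! hy
  have hbdd : BddAbove (MulAction.orbit G x) :=
    ⟨y, by rintro _ ⟨g, rfl⟩; exact (hy g g.2).le⟩
  obtain ⟨g, hg, hne⟩ := hG (sSup (MulAction.orbit G x))
  refine hne ?_
  calc g (sSup (MulAction.orbit G x)) = sSup (g '' MulAction.orbit G x) :=
        g.map_csSup' (MulAction.nonempty_orbit x) hbdd
    _ = sSup (MulAction.orbit G x) := congrArg sSup (MulAction.smul_orbit (⟨g, hg⟩ : G) x)

theorem exists_monotone_commute_of_not_contractsTo (hG : ∀ x y : α, ∃ g ∈ G, y ≤ g x)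
    {p q a b : α} (hpq : p < q) (hq : ContractsTo G p p q) (hab : ¬ ContractsTo G p a b) :
    ∃ φ : α → α, Monotone φ ∧ (∀ g ∈ G, Function.Commute φ g) ∧ p < φ p := by
  have hbdd := bddAbove_contractionReach hG hab
  refine ⟨fun x => sSup (contractionReach G p x), fun x y hxy => ?_, fun g hg x => ?_, ?_⟩
  · exact csSup_le_csSup (hbdd y) (contractionReach_nonempty p x) (contractionReach_mono p hxy)
  · rw [g.map_csSup' (contractionReach_nonempty p x) (hbdd x), image_contractionReach p x hg]
  · exact hpq.trans_le (le_csSup (hbdd p) (Or.inr hq))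

end Contraction

section Labellings

theorem Letter.inv_ne_self (l : Letter) : l.inv ≠ l := by cases l <;> decide

theorem IsLabelling.even_iff {ρ : ℤ → Letter} (hρ : IsLabelling ρ) {m : ℤ} :
    Even m ↔ ρ m = Letter.a ∨ ρ m = Letter.A := by
  refine ⟨(hρ m).1, fun hm => ?_⟩
  by_contra hodd
  rcases (hρ m).2 (Int.not_even_iff_odd.1 hodd) with hb | hb <;> simp [hb] at hm

theorem IsLabelling.even_iff_of_eq_inv {ρ : ℤ → Letter} (hρ : IsLabelling ρ) {m n : ℤ}
    (h : ρ m = (ρ n).inv) : Even m ↔ Even n := by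
  rw [hρ.even_iff, hρ.even_iff, h]
  cases ρ n <;> simp [Letter.inv]

theorem length_blockWord (ρ : ℤ → Letter) (k : ℤ) (n : ℕ) : (blockWord ρ k n).length = n + 1 := by
  simp [blockWord]

theorem getElem_blockWord (ρ : ℤ → Letter) (k : ℤ) (n i : ℕ) (hi : i < (blockWord ρ k n).length) :
    (blockWord ρ k n)[i] = ρ (k + i) := by
  simp [blockWord, ← List.map_eq_flatMap]

theorem apply_eq_inv_of_blockWord_eq_wordInv {ρ : ℤ → Letter} {k k' : ℤ} {n i : ℕ}
    (h : blockWord ρ k' n = wordInv (blockWord ρ k n)) (hi : i ≤ n) :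
    ρ (k' + i) = (ρ (k + (n - i))).inv := by
  have hlt : i < (blockWord ρ k' n).length := by rw [length_blockWord]; lia
  have hget := List.getElem_of_eq h hlt
  simpa [wordInv, length_blockWord, getElem_blockWord, Nat.cast_sub hi] using hget

theorem IsLabelling.not_periodic_of_forall_exists_wordInv {ρ : ℤ → Letter} (hρ : IsLabelling ρ)
    (hinv : ∀ (k : ℤ) (n : ℕ), ∃ k' : ℤ, blockWord ρ k' n = wordInv (blockWord ρ k n)) {d : ℤ}
    (hd : 0 < d) : ¬ Function.Periodic ρ d := by
  -- Periodicity extends the inverse of one block to a reflection `ρ (k' + i) = (ρ (-i))⁻¹` of all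
  -- of `ρ`, with `k' = 2 r` even; at `i = -r` this reads `ρ r = (ρ r)⁻¹`.
  intro hper
  lift d to ℕ using hd.le
  obtain ⟨k', hk'⟩ := hinv 0 d
  have hreflect (i : ℤ) : ρ (k' + i) = (ρ (-i)).inv := by
    have hmod : 0 ≤ i % d := Int.emod_nonneg i hd.ne'
    have hlt : i % d < d := Int.emod_lt_of_pos i hd
    have hword := apply_eq_inv_of_blockWord_eq_wordInv hk' (i := (i % d).toNat) (by lia)
    rw [Int.toNat_of_nonneg hmod] at hword
    calc ρ (k' + i) = ρ (k' + i % d) := by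
          rw [← hper.int_mul (i / d) (k' + i % d)]
          congr 1
          linear_combination -Int.emod_add_mul_ediv i d
      _ = (ρ (0 + (d - i % d))).inv := hword
      _ = (ρ (-i)).inv := by
          rw [← hper.int_mul (i / d + 1) (-i)]
          congr 2
          push_cast
          linear_combination -Int.emod_add_mul_ediv i d
  obtain ⟨r, rfl⟩ : Even k' :=
    (hρ.even_iff_of_eq_inv (by simpa using hreflect 0)).2 Even.zero
  refine (ρ r).inv_ne_self ?_
  simpa using (hreflect (-r)).symm

end Labellings

section Cells

/-- The exponent `±1` of a letter. -/
def Letter.sign : Letter → ℝ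
  | .a => 1
  | .b => 1
  | .A => -1
  | .B => -1

theorem Letter.sign_eq_one_or_neg_one (l : Letter) : l.sign = 1 ∨ l.sign = -1 := by
  cases l <;> simp [Letter.sign]

theorem IsLabelling.eq_of_sign_eq {ρ : ℤ → Letter} (hρ : IsLabelling ρ) {k l : ℤ}
    (hkl : 2 ∣ l - k) (h : (ρ l).sign = (ρ k).sign) : ρ l = ρ k := by
  have hpar : Even l ↔ Even k := by grind
  rw [hρ.even_iff, hρ.even_iff] at hpar
  generalize ρ l = x, ρ k = y at *
  cases x <;> cases y <;> simp_all [Letter.sign] <;> linarith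

/-- The isometry of `[0, 1]` onto the unit interval centred at `k / 2`, orientation-preserving if
`ρ k` is `a` or `b` and orientation-reversing otherwise. -/
noncomputable def cellChart (ρ : ℤ → Letter) (k : ℤ) (t : ℝ) : ℝ :=
  k / 2 + (ρ k).sign * (t - 1 / 2)

theorem cellChart_half (ρ : ℤ → Letter) (k : ℤ) : cellChart ρ k (1 / 2) = k / 2 := by
  simp [cellChart]

theorem cellChart_one_fourth (ρ : ℤ → Letter) (k : ℤ) :
    cellChart ρ k (1 / 4) = k / 2 - (ρ k).sign / 4 := by
  rw [cellChart]
  ring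

theorem cellChart_three_fourths (ρ : ℤ → Letter) (k : ℤ) :
    cellChart ρ k (3 / 4) = k / 2 + (ρ k).sign / 4 := by
  rw [cellChart]
  ring

theorem cellChart_injective (ρ : ℤ → Letter) (k : ℤ) : Function.Injective (cellChart ρ k) := by
  intro s t h
  rcases (ρ k).sign_eq_one_or_neg_one with hσ | hσ <;> simp only [cellChart, hσ] at h <;> linarith

theorem exists_cellChart_eq (ρ : ℤ → Letter) {k : ℤ} {x : ℝ} (hx : |x - k / 2| ≤ 1 / 2) :
    ∃ t ∈ Set.Icc (0 : ℝ) 1, cellChart ρ k t = x := by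
  rw [abs_le] at hx
  rcases (ρ k).sign_eq_one_or_neg_one with hσ | hσ
  · exact ⟨1 / 2 + (x - k / 2), ⟨by linarith, by linarith⟩, by rw [cellChart, hσ]; ring⟩
  · exact ⟨1 / 2 - (x - k / 2), ⟨by linarith, by linarith⟩, by rw [cellChart, hσ]; ring⟩

theorem exists_abs_sub_half_le (p : ℤ) (x : ℝ) :
    ∃ k : ℤ, 2 ∣ k - p ∧ |x - k / 2| ≤ 1 / 2 := by
  refine ⟨p + 2 * round (x - p / 2), ⟨round (x - p / 2), by ring⟩, ?_⟩
  have hround : x - ((p + 2 * round (x - p / 2) : ℤ) : ℝ) / 2 = x - p / 2 - round (x - p / 2) := by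
    push_cast
    ring
  rw [hround]
  exact abs_sub_round _

/-- On each unit interval centred at a point `k / 2` with `k ≡ p` modulo `2`, the map `g` is the
conjugate of the map `f` of `[0, 1]` by the isometry that the labelling `ρ` prescribes there. For
`p = 0` this is how `χ` arises from `ν`, for `p = 1` it is how `ζ` does. -/
def IsCellwise (ρ : ℤ → Letter) (p : ℤ) (f g : ℝ ≃o ℝ) : Prop :=
  ∀ k : ℤ, 2 ∣ k - p → ∀ t ∈ Set.Icc (0 : ℝ) 1, g (cellChart ρ k t) = cellChart ρ k (f t)

namespace IsCellwise

variable {ρ : ℤ → Letter} {p : ℤ} {f f' g g' : ℝ ≃o ℝ}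

theorem congr_parity {q : ℤ} (h : IsCellwise ρ p f g) (hpq : 2 ∣ q - p) : IsCellwise ρ q f g :=
  fun k hk => h k (by lia)

theorem one (ρ : ℤ → Letter) (p : ℤ) : IsCellwise ρ p 1 1 := fun _ _ _ _ => rfl

theorem mul (h : IsCellwise ρ p f g) (h' : IsCellwise ρ p f' g')
    (hf' : Set.MapsTo f' (Set.Icc 0 1) (Set.Icc 0 1)) : IsCellwise ρ p (f * f') (g * g') := by
  intro k hk t ht
  rw [RelIso.mul_apply, RelIso.mul_apply, h' k hk t ht, h k hk _ (hf' ht)]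

theorem inv (h : IsCellwise ρ p f g) (hf : Set.MapsTo (f⁻¹ : ℝ ≃o ℝ) (Set.Icc 0 1) (Set.Icc 0 1)) :
    IsCellwise ρ p f⁻¹ g⁻¹ := by
  intro k hk t ht
  rw [← g.injective.eq_iff, RelIso.apply_inv_self, h k hk _ (hf ht), RelIso.apply_inv_self]

theorem apply_half_of_two_dvd_sub (h : IsCellwise ρ p f g) {k : ℤ} (hk : 2 ∣ k - p) :
    g (k / 2) = cellChart ρ k (f (1 / 2)) := by
  rw [← h k hk (1 / 2) (by norm_num), cellChart_half]

theorem apply_half_of_two_dvd_sub_sub_one (h : IsCellwise ρ p f g) (h0 : f 0 = 0) (h1 : f 1 = 1)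
    {k : ℤ} (hk : 2 ∣ k - p - 1) : g (k / 2) = k / 2 := by
  have hk' : 2 ∣ k + 1 - p := by lia
  obtain ⟨t, ht, hft, hchart⟩ :
      ∃ t ∈ Set.Icc (0 : ℝ) 1, f t = t ∧ cellChart ρ (k + 1) t = k / 2 := by
    rcases (ρ (k + 1)).sign_eq_one_or_neg_one with hσ | hσ
    · exact ⟨0, by simp, h0, by rw [cellChart, hσ]; push_cast; ring⟩
    · exact ⟨1, by simp, h1, by rw [cellChart, hσ]; push_cast; ring⟩
  rw [← hchart, h _ hk' t ht, hft]

end IsCellwise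

theorem exists_isCellwise_of_mem_closure {ρ : ℤ → Letter} {p : ℤ} {S : Set (ℝ ≃o ℝ)}
    {G : Subgroup (ℝ ≃o ℝ)}
    (hmaps : ∀ f ∈ Subgroup.closure S, Set.MapsTo f (Set.Icc 0 1) (Set.Icc 0 1))
    (hS : ∀ f ∈ S, ∃ g ∈ G, IsCellwise ρ p f g) {f : ℝ ≃o ℝ} (hf : f ∈ Subgroup.closure S) :
    ∃ g ∈ G, IsCellwise ρ p f g := by
  induction hf using Subgroup.closure_induction with
  | mem f hf => exact hS f hf
  | one => exact ⟨1, G.one_mem, .one ρ p⟩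
  | mul f f' _ hf' ih ih' =>
    obtain ⟨g, hg, h⟩ := ih
    obtain ⟨g', hg', h'⟩ := ih'
    exact ⟨g * g', G.mul_mem hg hg', h.mul h' (hmaps f' hf')⟩
  | inv f hf ih =>
    obtain ⟨g, hg, h⟩ := ih
    exact ⟨g⁻¹, G.inv_mem hg, h.inv (hmaps _ (inv_mem hf))⟩

theorem IsZeta.isCellwise {ρ : ℤ → Letter} (hρ : IsLabelling ρ) {ν ζ : ℝ ≃o ℝ}
    (h : IsZeta ρ ν ζ) : IsCellwise ρ 1 ν ζ := by
  intro k hk t ht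
  obtain ⟨n, rfl⟩ : ∃ n, k = 2 * n + 1 := hk.imp fun n hn => by lia
  rcases (hρ (2 * n + 1)).2 ⟨n, rfl⟩ with hb | hB
  · have hchart (s : ℝ) : cellChart ρ (2 * n + 1) s = n + s := by
      simp only [cellChart, hb, Letter.sign]; push_cast; ring
    rw [hchart, hchart, (h n (n + t) ⟨by linarith [ht.1], by linarith [ht.2]⟩).1 hb,
      add_sub_cancel_left]
  · have hchart (s : ℝ) : cellChart ρ (2 * n + 1) s = n + 1 - s := by
      simp only [cellChart, hB, Letter.sign]; push_cast; ring
    rw [hchart, hchart, (h n (n + 1 - t) ⟨by linarith [ht.2], by linarith [ht.1]⟩).2 hB,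
      sub_sub_cancel]

theorem IsChi.isCellwise {ρ : ℤ → Letter} (hρ : IsLabelling ρ) {ν χ : ℝ ≃o ℝ}
    (h : IsChi ρ ν χ) : IsCellwise ρ 0 ν χ := by
  intro k hk t ht
  obtain ⟨n, rfl⟩ : ∃ n, k = 2 * n := hk.imp fun n hn => by lia
  rcases (hρ (2 * n)).1 (even_two_mul n) with ha | hA
  · have hchart (s : ℝ) : cellChart ρ (2 * n) s = n - 1 / 2 + s := by
      simp only [cellChart, ha, Letter.sign]; push_cast; ring
    rw [hchart, hchart, (h n (n - 1 / 2 + t) ⟨by linarith [ht.1], by linarith [ht.2]⟩).1 ha,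
      add_sub_cancel_left]
  · have hchart (s : ℝ) : cellChart ρ (2 * n) s = n + 1 / 2 - s := by
      simp only [cellChart, hA, Letter.sign]; push_cast; ring
    rw [hchart, hchart, (h n (n + 1 / 2 - t) ⟨by linarith [ht.2], by linarith [ht.1]⟩).2 hA,
      sub_sub_cancel]

end Cells

section ThompsonElements

theorem InThompsonF.mapsTo_Icc {f : ℝ ≃o ℝ} (hf : InThompsonF f) :
    Set.MapsTo f (Set.Icc 0 1) (Set.Icc 0 1) := by
  intro t ht
  by_contra hft
  exact hft ((f.injective (hf.1 _ hft)).symm ▸ ht)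

theorem InH.apply_zero {f : ℝ ≃o ℝ} (hf : InH f) : f 0 = 0 := by
  obtain ⟨-, k, ε, hε, hzero, -⟩ := hf
  rw [hzero 0 ⟨le_rfl, hε.le⟩, mul_zero]

theorem InH.apply_one {f : ℝ ≃o ℝ} (hf : InH f) : f 1 = 1 := by
  obtain ⟨-, k, ε, hε, -, hone⟩ := hf
  rw [hone 1 ⟨by linarith, le_rfl⟩, sub_self, mul_zero, add_zero]

/-- The conjugate of `f` by the reflection `t ↦ 1 - t`. -/
def unitReflect (f : ℝ ≃o ℝ) : ℝ ≃o ℝ where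
  toFun t := 1 - f (1 - t)
  invFun t := 1 - f.symm (1 - t)
  left_inv t := by simp
  right_inv t := by simp
  map_rel_iff' := by
    intro s t
    change 1 - f (1 - s) ≤ 1 - f (1 - t) ↔ s ≤ t
    rw [sub_le_sub_iff_left, f.le_iff_le, sub_le_sub_iff_left]

theorem unitReflect_apply (f : ℝ ≃o ℝ) (t : ℝ) : unitReflect f t = 1 - f (1 - t) := rfl

theorem InThompsonF.unitReflect {f : ℝ ≃o ℝ} (hf : InThompsonF f) :
    InThompsonF (unitReflect f) := by
  obtain ⟨hid, m, x, hx0, hx1, hmono, hdyadic, hlin⟩ := hf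
  refine ⟨fun t ht => ?_, m, fun i => 1 - x i.rev, by simp [hx1], by simp [hx0],
    fun i j hij => sub_lt_sub_left (hmono (Fin.rev_lt_rev.2 hij)) 1, fun i => ?_, fun i => ?_⟩
  · have ht' : 1 - t ∉ Set.Icc (0 : ℝ) 1 := fun h => ht ⟨by linarith [h.2], by linarith [h.1]⟩
    rw [unitReflect_apply, hid _ ht', sub_sub_cancel]
  · obtain ⟨a, b, hab⟩ := hdyadic i.rev
    refine ⟨2 ^ b - a, b, ?_⟩
    simp only [hab]
    push_cast
    field_simp
  · obtain ⟨k, c, hkc⟩ := hlin i.rev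
    refine ⟨k, 1 - c - 2 ^ k, fun t ht => ?_⟩
    simp only [Fin.rev_castSucc, Fin.rev_succ] at ht
    rw [unitReflect_apply, hkc (1 - t) ⟨by linarith [ht.2], by linarith [ht.1]⟩]
    ring

theorem InH.unitReflect {f : ℝ ≃o ℝ} (hf : InH f) : InH (unitReflect f) := by
  obtain ⟨hF, k, ε, hε, hzero, hone⟩ := hf
  refine ⟨hF.unitReflect, k, ε, hε, fun t ht => ?_, fun t ht => ?_⟩
  · rw [unitReflect_apply, hone (1 - t) ⟨by linarith [ht.2], by linarith [ht.1]⟩]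
    ring
  · rw [unitReflect_apply, hzero (1 - t) ⟨by linarith [ht.2], by linarith [ht.1]⟩]
    ring

/-- The map underlying `endContraction`. -/
noncomputable def endContractionFun (t : ℝ) : ℝ :=
  if t ≤ 0 then t else if t ≤ 1 / 2 then t / 2 else if t ≤ 5 / 8 then 4 * t - 7 / 4
    else if t ≤ 3 / 4 then t + 1 / 8 else if t ≤ 1 then (t + 1) / 2 else t

theorem endContractionFun_strictMono : StrictMono endContractionFun := by
  intro s t hst
  unfold endContractionFun
  split_ifs <;> linarith

theorem endContractionFun_surjective : Function.Surjective endContractionFun := by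
  intro s
  refine ⟨if s ≤ 0 then s else if s ≤ 1 / 4 then 2 * s else if s ≤ 3 / 4 then (s + 7 / 4) / 4
    else if s ≤ 7 / 8 then s - 1 / 8 else if s ≤ 1 then 2 * s - 1 else s, ?_⟩
  split_ifs <;> unfold endContractionFun <;> split_ifs <;> linarith

/-- An element of `H` with slope `1 / 2` at both ends, and indeed on all of `[0, 1/2]`: the four
pieces on `[0, 1]` have slopes `1/2`, `4`, `1`, `1/2`. -/
noncomputable def endContraction : ℝ ≃o ℝ :=
  endContractionFun_strictMono.orderIsoOfSurjective _ endContractionFun_surjective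

theorem endContraction_apply (t : ℝ) : endContraction t = if t ≤ 0 then t
    else if t ≤ 1 / 2 then t / 2 else if t ≤ 5 / 8 then 4 * t - 7 / 4
    else if t ≤ 3 / 4 then t + 1 / 8 else if t ≤ 1 then (t + 1) / 2 else t := rfl

theorem endContraction_of_notMem_Icc {t : ℝ} (ht : t ∉ Set.Icc (0 : ℝ) 1) :
    endContraction t = t := by
  rw [Set.mem_Icc, not_and_or, not_le, not_le] at ht
  rw [endContraction_apply]
  split_ifs <;> rcases ht with h | h <;> linarith

theorem endContraction_of_mem_Icc_zero_half {t : ℝ} (ht : t ∈ Set.Icc (0 : ℝ) (1 / 2)) :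
    endContraction t = t / 2 := by
  obtain ⟨h, h'⟩ := ht
  rw [endContraction_apply]
  split_ifs <;> linarith

theorem endContraction_of_mem_Icc_three_fourths_one {t : ℝ} (ht : t ∈ Set.Icc (3 / 4 : ℝ) 1) :
    endContraction t = (t + 1) / 2 := by
  obtain ⟨h, h'⟩ := ht
  rw [endContraction_apply]
  split_ifs <;> linarith

theorem inThompsonF_endContraction : InThompsonF endContraction := by
  refine ⟨fun t => endContraction_of_notMem_Icc, 4, ![0, 1 / 2, 5 / 8, 3 / 4, 1], rfl, rfl, ?_, ?_,
    ?_⟩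
  · rw [Fin.strictMono_iff_lt_succ]
    intro i
    fin_cases i <;> simp <;> norm_num
  · intro i
    fin_cases i
    exacts [(⟨0, 0, by norm_num⟩ : IsDyadic 0), (⟨1, 1, by norm_num⟩ : IsDyadic (1 / 2)),
      (⟨5, 3, by norm_num⟩ : IsDyadic (5 / 8)), (⟨3, 2, by norm_num⟩ : IsDyadic (3 / 4)),
      (⟨1, 0, by norm_num⟩ : IsDyadic 1)]
  · intro i
    fin_cases i
    · refine ⟨-1, 0, fun t ht => ?_⟩
      rw [endContraction_of_mem_Icc_zero_half ht]
      norm_num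
      ring
    · refine ⟨2, -7 / 4, fun t ht => ?_⟩
      have h : 1 / 2 ≤ t := ht.1
      have h' : t ≤ 5 / 8 := ht.2
      rw [endContraction_apply]
      split_ifs <;> linarith
    · refine ⟨0, 1 / 8, fun t ht => ?_⟩
      have h : 5 / 8 ≤ t := ht.1
      have h' : t ≤ 3 / 4 := ht.2
      rw [endContraction_apply]
      split_ifs <;> linarith
    · refine ⟨-1, 1 / 2, fun t ht => ?_⟩
      rw [endContraction_of_mem_Icc_three_fourths_one ht]
      norm_num
      ring

theorem inH_endContraction : InH endContraction := by
  refine ⟨inThompsonF_endContraction, -1, 1 / 4, by norm_num, fun t ht => ?_, fun t ht => ?_⟩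
  · rw [endContraction_of_mem_Icc_zero_half ⟨ht.1, by linarith [ht.2]⟩]
    ring
  · rw [endContraction_of_mem_Icc_three_fourths_one ⟨by linarith [ht.1], ht.2⟩]
    ring

theorem endContraction_half : endContraction (1 / 2) = 1 / 4 := by
  rw [endContraction_of_mem_Icc_zero_half (by norm_num)]
  norm_num

theorem unitReflect_endContraction_half : unitReflect endContraction (1 / 2) = 3 / 4 := by
  rw [unitReflect_apply, sub_half, endContraction_half]
  norm_num

theorem eq_zero_or_one_of_endContraction_eq {t : ℝ} (ht : t ∈ Set.Icc (0 : ℝ) 1)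
    (hfix : endContraction t = t) (hfix' : unitReflect endContraction t = t) : t = 0 ∨ t = 1 := by
  rcases le_total t (1 / 2) with h | h
  · rw [endContraction_of_mem_Icc_zero_half ⟨ht.1, h⟩] at hfix
    left; linarith
  · rw [unitReflect_apply,
      endContraction_of_mem_Icc_zero_half ⟨by linarith [ht.2], by linarith⟩] at hfix'
    right; linarith

end ThompsonElements

section CellwiseGroups

/-- `G` can apply any element of `H` in all unit intervals centred at integers (`p` even), and in
all those centred at points of `ℤ + 1/2` (`p` odd). The proof uses nothing else about `G_ρ`. -/
def ContainsCellwise (ρ : ℤ → Letter) (G : Subgroup (ℝ ≃o ℝ)) : Prop :=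
  ∀ f, InH f → ∀ p : ℤ, ∃ g ∈ G, IsCellwise ρ p f g

theorem containsCellwise_of_generators {ρ : ℤ → Letter} (hρ : IsLabelling ρ) {S : Set (ℝ ≃o ℝ)}
    (hS : ∀ f, f ∈ Subgroup.closure S ↔ InH f) {G : Subgroup (ℝ ≃o ℝ)}
    (hζ : ∀ ν ∈ S, ∃ ζ ∈ G, IsZeta ρ ν ζ) (hχ : ∀ ν ∈ S, ∃ χ ∈ G, IsChi ρ ν χ) :
    ContainsCellwise ρ G := by
  intro f hf p
  have hmaps (f') (hf' : f' ∈ Subgroup.closure S) :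
      Set.MapsTo f' (Set.Icc 0 1) (Set.Icc 0 1) := ((hS f').1 hf').1.mapsTo_Icc
  rcases Int.even_or_odd' p with ⟨m, rfl | rfl⟩
  · obtain ⟨g, hg, h⟩ := exists_isCellwise_of_mem_closure hmaps
      (fun ν hν => (hχ ν hν).imp fun _ h => ⟨h.1, h.2.isCellwise hρ⟩) ((hS f).2 hf)
    exact ⟨g, hg, h.congr_parity (by simp)⟩
  · obtain ⟨g, hg, h⟩ := exists_isCellwise_of_mem_closure hmaps
      (fun ν hν => (hζ ν hν).imp fun _ h => ⟨h.1, h.2.isCellwise hρ⟩) ((hS f).2 hf)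
    exact ⟨g, hg, h.congr_parity (by simp)⟩

namespace ContainsCellwise

variable {ρ : ℤ → Letter} {G : Subgroup (ℝ ≃o ℝ)}

theorem exists_apply_add_eq (hG : ContainsCellwise ρ G) {f : ℝ ≃o ℝ} (hf : InH f) (j : ℤ) :
    ∃ g ∈ G, ∀ s ∈ Set.Icc (0 : ℝ) 1, g (j / 2 + s) = j / 2 + f s := by
  rcases (ρ (j + 1)).sign_eq_one_or_neg_one with hσ | hσ
  · have hchart (s : ℝ) : cellChart ρ (j + 1) s = j / 2 + s := by
      rw [cellChart, hσ]; push_cast; ring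
    obtain ⟨g, hg, h⟩ := hG f hf (j + 1)
    refine ⟨g, hg, fun s hs => ?_⟩
    rw [← hchart, h (j + 1) (by simp) s hs, hchart]
  · have hchart (s : ℝ) : cellChart ρ (j + 1) s = j / 2 + (1 - s) := by
      rw [cellChart, hσ]; push_cast; ring
    obtain ⟨g, hg, h⟩ := hG (unitReflect f) hf.unitReflect (j + 1)
    refine ⟨g, hg, fun s hs => ?_⟩
    have hs' := h (j + 1) (by simp) (1 - s) ⟨by linarith [hs.2], by linarith [hs.1]⟩
    rwa [hchart, hchart, unitReflect_apply, sub_sub_cancel, sub_sub_cancel] at hs'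

theorem exists_halving_right (hG : ContainsCellwise ρ G) (j : ℤ) :
    ∃ g ∈ G, ∀ s ∈ Set.Icc (0 : ℝ) (1 / 2), g (j / 2 + s) = j / 2 + s / 2 := by
  obtain ⟨g, hg, h⟩ := hG.exists_apply_add_eq inH_endContraction j
  refine ⟨g, hg, fun s hs => ?_⟩
  rw [h s ⟨hs.1, by linarith [hs.2]⟩, endContraction_of_mem_Icc_zero_half hs]

theorem exists_halving_left (hG : ContainsCellwise ρ G) (j : ℤ) :
    ∃ g ∈ G, ∀ s ∈ Set.Icc (0 : ℝ) (1 / 2), g (j / 2 - s) = j / 2 - s / 2 := by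
  obtain ⟨g, hg, h⟩ := hG.exists_apply_add_eq inH_endContraction.unitReflect (j - 2)
  refine ⟨g, hg, fun s hs => ?_⟩
  calc g (j / 2 - s) = g ((j - 2 : ℤ) / 2 + (1 - s)) := by push_cast; ring_nf
    _ = (j - 2 : ℤ) / 2 + (1 - endContraction s) := by
        rw [h (1 - s) ⟨by linarith [hs.2], by linarith [hs.1]⟩, unitReflect_apply, sub_sub_cancel]
    _ = j / 2 - s / 2 := by
        rw [endContraction_of_mem_Icc_zero_half hs]; push_cast; ring

theorem exists_apply_eq_half_add_div_two (hG : ContainsCellwise ρ G) (j : ℤ) {s : ℝ}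
    (hs : |s| ≤ 1 / 2) : ∃ g ∈ G, g (j / 2 + s) = j / 2 + s / 2 := by
  rw [abs_le] at hs
  rcases le_total 0 s with h | h
  · obtain ⟨g, hg, hgs⟩ := hG.exists_halving_right j
    exact ⟨g, hg, hgs s ⟨h, hs.2⟩⟩
  · obtain ⟨g, hg, hgs⟩ := hG.exists_halving_left j
    refine ⟨g, hg, ?_⟩
    simpa [neg_div] using hgs (-s) ⟨by linarith, by linarith [hs.1]⟩

theorem contractsTo_half_add_half (hG : ContainsCellwise ρ G) (j : ℤ) :
    ContractsTo G ((j : ℝ) / 2) (j / 2) (j / 2 + 1 / 2) := by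
  intro l u hl hu
  obtain ⟨g, hg, h⟩ := hG.exists_halving_right j
  have hpow (n : ℕ) {s : ℝ} (hs : s ∈ Set.Icc (0 : ℝ) (1 / 2)) :
      (g ^ n) (j / 2 + s) = j / 2 + s / 2 ^ n := by
    induction n generalizing s with
    | zero => simp
    | succ n ih =>
      rw [pow_succ, RelIso.mul_apply, h s hs, ih ⟨by linarith [hs.1], by linarith [hs.1, hs.2]⟩]
      ring
  obtain ⟨n, hn⟩ := exists_pow_lt_of_lt_one (sub_pos.2 hu) (one_half_lt_one (α := ℝ))
  refine ⟨g ^ n, G.pow_mem hg n, ?_, ?_⟩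
  · have hzero := hpow n (s := 0) (by norm_num)
    rw [add_zero, zero_div, add_zero] at hzero
    rwa [hzero]
  · rw [hpow n (by norm_num), div_div, mul_comm, ← div_div, ← one_div_pow]
    linarith [pow_pos (one_half_pos (α := ℝ)) n]

theorem exists_apply_half_eq_div_two_pow (hG : ContainsCellwise ρ G) (q : ℕ) (m : ℤ) :
    ∃ g ∈ G, ∃ k : ℤ, g (k / 2) = m / 2 ^ (q + 1) := by
  induction q generalizing m with
  | zero => exact ⟨1, G.one_mem, m, by simp⟩
  | succ q ih =>
    -- Halving the distance to the nearest half-integer `j / 2` halves the dyadic scale.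
    set x : ℝ := m / 2 ^ (q + 1 + 1) with hx
    set j : ℤ := round (2 * x)
    obtain ⟨g, hg, hgx⟩ := hG.exists_apply_eq_half_add_div_two j (abs_sub_round (2 * x))
    obtain ⟨f, hf, k, hfk⟩ := ih (m - j * 2 ^ q)
    refine ⟨g * f, G.mul_mem hg hf, k, ?_⟩
    have hstart : ((m - j * 2 ^ q : ℤ) : ℝ) / 2 ^ (q + 1) = j / 2 + (2 * x - j) := by
      rw [hx]
      push_cast
      field_simp
      ring
    rw [RelIso.mul_apply, hfk, hstart, hgx]
    ring

theorem exists_apply_half_mem_Ioo (hG : ContainsCellwise ρ G) {c d : ℝ} (hcd : c < d) :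
    ∃ g ∈ G, ∃ k : ℤ, g (k / 2) ∈ Set.Ioo c d := by
  obtain ⟨q, hq⟩ := pow_unbounded_of_one_lt (d - c)⁻¹ (one_lt_two (α := ℝ))
  have hq' : (d - c)⁻¹ < ((2 ^ (q + 1) : ℕ) : ℝ) := by
    push_cast
    exact hq.trans (pow_lt_pow_right₀ one_lt_two q.lt_succ_self)
  obtain ⟨m, hm⟩ := exists_div_btwn hcd hq'
  obtain ⟨g, hg, k, hk⟩ := hG.exists_apply_half_eq_div_two_pow q m
  refine ⟨g, hg, k, ?_⟩
  rw [hk]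
  exact_mod_cast hm

theorem exists_eq_half_of_forall_isCellwise_apply_eq (hG : ContainsCellwise ρ G) (p : ℤ) {z : ℝ}
    (hz : ∀ f, InH f → ∀ g ∈ G, IsCellwise ρ p f g → g z = z) :
    ∃ k : ℤ, 2 ∣ k - p - 1 ∧ z = k / 2 := by
  obtain ⟨k, hk, hzk⟩ := exists_abs_sub_half_le p z
  obtain ⟨t, ht, rfl⟩ := exists_cellChart_eq ρ hzk
  have hfix (f) (hf : InH f) : f t = t := by
    obtain ⟨g, hg, h⟩ := hG f hf p
    exact cellChart_injective ρ k ((h k hk t ht).symm.trans (hz f hf g hg h))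
  obtain hchart | hchart :
      cellChart ρ k t = (k - 1 : ℤ) / 2 ∨ cellChart ρ k t = (k + 1 : ℤ) / 2 := by
    rcases eq_zero_or_one_of_endContraction_eq ht (hfix _ inH_endContraction)
      (hfix _ inH_endContraction.unitReflect) with rfl | rfl <;>
    rcases (ρ k).sign_eq_one_or_neg_one with hσ | hσ <;>
    [left; right; right; left] <;>
    rw [cellChart, hσ] <;> push_cast <;> ring
  · exact ⟨k - 1, by lia, hchart⟩
  · exact ⟨k + 1, by lia, hchart⟩

theorem exists_apply_ne (hG : ContainsCellwise ρ G) (z : ℝ) : ∃ g ∈ G, g z ≠ z := by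
  by_contra! hfix
  obtain ⟨k, hk, hzk⟩ := hG.exists_eq_half_of_forall_isCellwise_apply_eq 0
    fun _ _ g hg _ => hfix g hg
  obtain ⟨l, hl, hzl⟩ := hG.exists_eq_half_of_forall_isCellwise_apply_eq 1
    fun _ _ g hg _ => hfix g hg
  have hkl : (k : ℝ) = l := by linarith
  rw [Int.cast_inj] at hkl
  lia

section Commute

variable {φ : ℝ → ℝ}

theorem exists_map_half_eq (hG : ContainsCellwise ρ G)
    (hφ : ∀ g ∈ G, Function.Commute φ g) (k : ℤ) : ∃ l : ℤ, 2 ∣ l - k ∧ φ (k / 2) = l / 2 := by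
  obtain ⟨l, hl, hφl⟩ := hG.exists_eq_half_of_forall_isCellwise_apply_eq (k - 1)
    (z := φ (k / 2)) fun f hf g hg h => by
      rw [← hφ g hg, h.apply_half_of_two_dvd_sub_sub_one hf.apply_zero hf.apply_one (by simp)]
  exact ⟨l, by lia, hφl⟩

theorem map_cellChart_eq (hG : ContainsCellwise ρ G)
    (hφ : ∀ g ∈ G, Function.Commute φ g) {k l : ℤ} (hkl : 2 ∣ l - k) (hφk : φ (k / 2) = l / 2)
    {f : ℝ ≃o ℝ} (hf : InH f) : φ (cellChart ρ k (f (1 / 2))) = cellChart ρ l (f (1 / 2)) := by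
  obtain ⟨g, hg, h⟩ := hG f hf k
  rw [← h.apply_half_of_two_dvd_sub (by simp), hφ g hg, hφk, h.apply_half_of_two_dvd_sub hkl]

theorem sign_eq_and_map_quarters_eq (hG : ContainsCellwise ρ G)
    (hφ : ∀ g ∈ G, Function.Commute φ g) (hmono : Monotone φ) {k l : ℤ} (hkl : 2 ∣ l - k)
    (hφk : φ (k / 2) = l / 2) :
    (ρ l).sign = (ρ k).sign ∧ φ (k / 2 - 1 / 4) = l / 2 - 1 / 4 ∧
      φ (k / 2 + 1 / 4) = l / 2 + 1 / 4 := by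
  have hleft := hG.map_cellChart_eq hφ hkl hφk inH_endContraction
  have hright := hG.map_cellChart_eq hφ hkl hφk inH_endContraction.unitReflect
  rw [endContraction_half, cellChart_one_fourth, cellChart_one_fourth] at hleft
  rw [unitReflect_endContraction_half, cellChart_three_fourths, cellChart_three_fourths] at hright
  have hle : φ (k / 2 - 1 / 4) ≤ φ (k / 2 + 1 / 4) := hmono (by linarith)
  have hsign : (ρ l).sign = (ρ k).sign := by
    rcases (ρ k).sign_eq_one_or_neg_one with hσ | hσ <;>
    rcases (ρ l).sign_eq_one_or_neg_one with hτ | hτ <;>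
    simp only [hσ, hτ, neg_div, sub_neg_eq_add, ← sub_eq_add_neg] at hleft hright ⊢ <;> linarith
  refine ⟨hsign, ?_⟩
  rw [hsign] at hleft hright
  rcases (ρ k).sign_eq_one_or_neg_one with hσ | hσ <;>
  simp only [hσ, neg_div, sub_neg_eq_add, ← sub_eq_add_neg] at hleft hright
  · exact ⟨hleft, hright⟩
  · exact ⟨hright, hleft⟩

theorem exists_periodic_of_monotone (hG : ContainsCellwise ρ G)
    (hφ : ∀ g ∈ G, Function.Commute φ g) (hρ : IsLabelling ρ) (hmono : Monotone φ) :
    ∃ d : ℤ, Function.Periodic ρ d ∧ ∀ k : ℤ, φ (k / 2) = (k + d) / 2 := by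
  choose L hL hφL using hG.exists_map_half_eq hφ
  have hquarters (k : ℤ) := hG.sign_eq_and_map_quarters_eq hφ hmono (hL k) (hφL k)
  have hstep : Function.Periodic (fun k => L k - k) 1 := by
    intro k
    have hleft := (hquarters (k + 1)).2.1
    rw [show ((k + 1 : ℤ) : ℝ) / 2 - 1 / 4 = k / 2 + 1 / 4 by push_cast; ring,
      (hquarters k).2.2] at hleft
    have hcast : (L (k + 1) : ℝ) = (L k + 1 : ℤ) := by push_cast; linarith
    rw [Int.cast_inj] at hcast
    simp only [hcast]
    ring
  have hshift (k : ℤ) : L k = k + L 0 := by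
    have hk := hstep.int_mul_eq k
    simp only [mul_one, Int.cast_id, sub_zero] at hk
    linarith
  refine ⟨L 0, fun k => ?_, fun k => ?_⟩
  · rw [← hshift]
    exact hρ.eq_of_sign_eq (hL k) (hquarters k).1
  · rw [hφL, hshift]
    push_cast
    rfl

end Commute

theorem contractsTo_half (hG : ContainsCellwise ρ G) (hρ : IsLabelling ρ)
    (hper : ∀ d : ℤ, 0 < d → ¬ Function.Periodic ρ d) (k : ℤ) (a b : ℝ) :
    ContractsTo G ((k : ℝ) / 2) a b := by
  by_contra hab
  obtain ⟨φ, hmono, hφ, hlt⟩ := exists_monotone_commute_of_not_contractsTo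
    (exists_le_apply_of_forall_exists_ne hG.exists_apply_ne) (lt_add_of_pos_right _ one_half_pos)
    (hG.contractsTo_half_add_half k) hab
  obtain ⟨d, hd, hφd⟩ := hG.exists_periodic_of_monotone hφ hρ hmono
  refine hper d ?_ hd
  have hpos : (0 : ℝ) < d := by linarith [hφd k]
  exact_mod_cast hpos

end ContainsCellwise

end CellwiseGroups

theorem G_rho_action_proximal_general {ρ : ℤ → Letter} (hρ : IsLabelling ρ)
    (hper : ∀ d : ℤ, 0 < d → ¬ Function.Periodic ρ d) {S : Set (ℝ ≃o ℝ)}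
    (hS : ∀ f, f ∈ Subgroup.closure S ↔ InH f) {G : Subgroup (ℝ ≃o ℝ)}
    (hζ : ∀ ν ∈ S, ∃ ζ ∈ G, IsZeta ρ ν ζ) (hχ : ∀ ν ∈ S, ∃ χ ∈ G, IsChi ρ ν χ) (a b : ℝ)
    {c d : ℝ} (hcd : c < d) : ∃ g ∈ G, g '' Set.Icc a b ⊆ Set.Ioo c d := by
  have hG := containsCellwise_of_generators hρ hS hζ hχ
  obtain ⟨f, hf, k, hk⟩ := hG.exists_apply_half_mem_Ioo hcd
  exact (hG.contractsTo_half hρ hper k a b).exists_image_Icc_subset_Ioo hf hk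

/-- For a quasi-periodic labelling `ρ`, the action of `G_ρ` on `ℝ`
is proximal: every compact interval can be moved into any nonempty open interval. -/
theorem G_rho_action_proximal
    (ρ : ℤ → Letter) (hρ : IsQuasiPeriodic ρ)
    (H : Subgroup (ℝ ≃o ℝ)) (hH : ∀ f : ℝ ≃o ℝ, f ∈ H ↔ InH f)
    (ν₁ ν₂ ν₃ : ℝ ≃o ℝ) (hgen : Subgroup.closure {ν₁, ν₂, ν₃} = H)
    (ζ₁ ζ₂ ζ₃ χ₁ χ₂ χ₃ : ℝ ≃o ℝ)
    (hζ₁ : IsZeta ρ ν₁ ζ₁) (hζ₂ : IsZeta ρ ν₂ ζ₂) (hζ₃ : IsZeta ρ ν₃ ζ₃)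
    (hχ₁ : IsChi ρ ν₁ χ₁) (hχ₂ : IsChi ρ ν₂ χ₂) (hχ₃ : IsChi ρ ν₃ χ₃)
    (G : Subgroup (ℝ ≃o ℝ))
    (hG : G = Subgroup.closure {ζ₁, ζ₂, ζ₃, χ₁, χ₂, χ₃})
    : ∀ a b c d : ℝ, a ≤ b → c < d →
      ∃ g ∈ G, (fun x : ℝ => g x) '' Set.Icc a b ⊆ Set.Ioo c d := by
  have hmem : {ζ₁, ζ₂, ζ₃, χ₁, χ₂, χ₃} ⊆ (G : Set (ℝ ≃o ℝ)) := hG ▸ Subgroup.subset_closure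
  simp only [Set.insert_subset_iff, Set.singleton_subset_iff, SetLike.mem_coe] at hmem
  obtain ⟨hζG₁, hζG₂, hζG₃, hχG₁, hχG₂, hχG₃⟩ := hmem
  refine fun a b c d _ hcd => G_rho_action_proximal_general hρ.1
    (fun d => hρ.1.not_periodic_of_forall_exists_wordInv hρ.2.2) (hgen ▸ hH) ?_ ?_ a b hcd
  · rintro _ (rfl | rfl | rfl)
    exacts [⟨ζ₁, hζG₁, hζ₁⟩, ⟨ζ₂, hζG₂, hζ₂⟩, ⟨ζ₃, hζG₃, hζ₃⟩]
  · rintro _ (rfl | rfl | rfl)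
    exacts [⟨χ₁, hχG₁, hχ₁⟩, ⟨χ₂, hχG₂, hχ₂⟩, ⟨χ₃, hχG₃, hχ₃⟩]
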